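/- For every integer k ≥ 3 there exist a real ε > 0 and a positive integer n₀ such that the following holds. Let n > n₀ and let s be an integer with n(1/k − 1/(2k²)) − 1 < s ≤ (n − k + 1)/k. If F ⊆ binom([n],k) is an s-saturated k-graph with ν(F) ≤ s and (1−ε)ks ≤ ω(F) ≤ ks + k − 3, then |F| ≤ C(ks+k−1, k) − 3.98·C(⌈(1−ε)ks⌉, k−1) + (2 + 8εk⁴)·C(n, k−1). -/

import Mathlib

/-- The `(x,y)`-shift of a single edge `A` with respect to the family `F`. -/
def shiftEdge (x y : ℕ) (F : Finset (Finset ℕ)) (A : Finset ℕ) : Finset ℕ :=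
  if y ∈ A ∧ x ∉ A ∧ insert x (A.erase y) ∉ F then insert x (A.erase y) else A

/-- The `(x,y)`-shift of a family `F`. -/
def shiftFam (x y : ℕ) (F : Finset (Finset ℕ)) : Finset (Finset ℕ) :=
  F.image (shiftEdge x y F)

/-- The matching number: the largest size of a pairwise-disjoint subfamily. -/
noncomputable def matchingNumber (F : Finset (Finset ℕ)) : ℕ :=
  sSup {m | ∃ M ⊆ F, M.card = m ∧ (M : Set (Finset ℕ)).PairwiseDisjoint id}

/-- `F` is non-trivial on `[n]`: no vertex of `[n] = {1,…,n}` is isolated. -/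
def NonTrivial (n : ℕ) (F : Finset (Finset ℕ)) : Prop :=
  ∀ v ∈ Finset.Icc 1 n, ∃ A ∈ F, v ∈ A

/-- `F` is shifted on `Y`: all `(x,y)`-shifts with `x < y` in `Y` fix `F`. -/
def ShiftedOn (Y : Finset ℕ) (F : Finset (Finset ℕ)) : Prop :=
  ∀ x ∈ Y, ∀ y ∈ Y, x < y → shiftFam x y F = F

/-- The clique number of the `k`-graph `F` on `[n]`. -/
noncomputable def cliqueNum (n k : ℕ) (F : Finset (Finset ℕ)) : ℕ :=
  sSup {m | ∃ U ⊆ Finset.Icc 1 n, U.card = m ∧ Finset.powersetCard k U ⊆ F}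

/-- The vertex-cover number of the `k`-graph `F` on `[n]`. -/
noncomputable def coverNum (n : ℕ) (F : Finset (Finset ℕ)) : ℕ :=
  sInf {t | ∃ T ⊆ Finset.Icc 1 n, T.card = t ∧ ∀ A ∈ F, (A ∩ T).Nonempty}

/-- The link `N_F(x)`. -/
def nbr (F : Finset (Finset ℕ)) (x : ℕ) : Finset (Finset ℕ) :=
  (F.filter fun A => x ∈ A).image fun A => A.erase x

/-- The link `N_F(x,y)`. -/
def nbr2 (F : Finset (Finset ℕ)) (x y : ℕ) : Finset (Finset ℕ) :=
  (F.filter fun A => x ∈ A ∧ y ∈ A).image fun A => (A.erase x).erase y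

/-- The link `N_F(x, ȳ)`. -/
def nbrBar (F : Finset (Finset ℕ)) (x y : ℕ) : Finset (Finset ℕ) :=
  (F.filter fun A => x ∈ A ∧ y ∉ A).image fun A => A.erase x

/-- The extremal family `E₀(n,k,s)`. -/
def E0 (n k s : ℕ) : Finset (Finset ℕ) :=
  Finset.powersetCard k (Finset.Icc 1 (k * s + k - 2)) ∪
  ((Finset.powersetCard k (Finset.Icc 1 n)).filter
    (fun A => A \ Finset.Icc 1 (k * s + k - 2) = {k * s + k - 1} ∧
      (A ∩ Finset.Icc 1 (k - 1)).Nonempty)) ∪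
  ((Finset.Icc (k * s + k) n).image (fun x => insert x (Finset.Icc 1 (k - 1))))

open Classical in
/-- The extremal family `E₁(n,k,s)`. -/
noncomputable def E1 (n k s : ℕ) : Finset (Finset ℕ) :=
  Finset.powersetCard k (Finset.Icc 1 (k * s + k - 2)) ∪
  ((Finset.powersetCard k (Finset.Icc 1 n)).filter
    (fun A => 1 ∈ A ∧ ∃ x ∈ Finset.Icc (k * s + k - 1) n,
      A \ Finset.Icc 1 (k * s + k - 2) = {x}))

/-- `F` is `s`-saturated on `[n]`. -/
def Saturated (n k s : ℕ) (F : Finset (Finset ℕ)) : Prop :=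
  matchingNumber F ≤ s ∧
  ∀ G ∈ Finset.powersetCard k (Finset.Icc 1 n), G ∉ F →
    matchingNumber (insert G F) = s + 1


open Finset in
lemma card_le_matchingNumber {F M : Finset (Finset ℕ)} (h : M ⊆ F)
    (hd : (M : Set (Finset ℕ)).PairwiseDisjoint id) : M.card ≤ matchingNumber F := by
  unfold matchingNumber
  apply le_csSup
  · refine ⟨F.card, ?_⟩
    rintro m ⟨M', hM', rfl, -⟩
    exact card_le_card hM'
  · exact ⟨M, h, rfl, hd⟩

lemma exists_matchingNumber (F : Finset (Finset ℕ)) :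
    ∃ M ⊆ F, M.card = matchingNumber F ∧ (M : Set (Finset ℕ)).PairwiseDisjoint id := by
  have := Nat.sSup_mem (s := {m | ∃ M ⊆ F, M.card = m ∧ (M : Set (Finset ℕ)).PairwiseDisjoint id})
    ⟨0, ∅, by simp, by simp, by simp⟩ ⟨F.card, by
      rintro m ⟨M', hM', rfl, -⟩
      exact Finset.card_le_card hM'⟩
  exact this

lemma exists_cliqueNum (n k : ℕ) (F : Finset (Finset ℕ)) (hk : 1 ≤ k) :
    ∃ U ⊆ Finset.Icc 1 n, U.card = cliqueNum n k F ∧ Finset.powersetCard k U ⊆ F := by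
  have := Nat.sSup_mem
    (s := {m | ∃ U ⊆ Finset.Icc 1 n, U.card = m ∧ Finset.powersetCard k U ⊆ F})
    ⟨0, ∅, by simp, by simp, by
      rw [Finset.powersetCard_eq_empty.2 (by rw [Finset.card_empty]; omega)]; simp⟩ ⟨(Finset.Icc 1 n).card, by
      rintro m ⟨M', hM', rfl, -⟩
      exact Finset.card_le_card hM'⟩
  exact this

lemma card_le_cliqueNum {n k : ℕ} {F : Finset (Finset ℕ)} {U : Finset ℕ}
    (h : U ⊆ Finset.Icc 1 n) (hU : Finset.powersetCard k U ⊆ F) : U.card ≤ cliqueNum n k F := by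
  unfold cliqueNum
  apply le_csSup
  · refine ⟨(Finset.Icc 1 n).card, ?_⟩
    rintro m ⟨M', hM', rfl, -⟩
    exact Finset.card_le_card hM'
  · exact ⟨U, h, rfl, hU⟩

/-- Adding a disjoint edge to a matching. -/
lemma pairwiseDisjoint_insert' {M : Finset (Finset ℕ)} {e : Finset ℕ}
    (hM : (M : Set (Finset ℕ)).PairwiseDisjoint id) (he : Disjoint e (M.biUnion id)) :
    ((insert e M : Finset (Finset ℕ)) : Set (Finset ℕ)).PairwiseDisjoint id := by
  rw [Finset.coe_insert]
  refine hM.insert ?_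
  intro j hj _
  rw [Finset.disjoint_biUnion_right] at he
  exact he j (by simpa using hj)

lemma notMem_of_disjoint_biUnion {M : Finset (Finset ℕ)} {e : Finset ℕ} (hne : e.Nonempty)
    (he : Disjoint e (M.biUnion id)) : e ∉ M := by
  intro h
  rw [Finset.disjoint_biUnion_right] at he
  have := he e h
  simp at this
  exact hne.ne_empty this

lemma card_biUnion_uniform {k : ℕ} {M : Finset (Finset ℕ)}
    (hM : (M : Set (Finset ℕ)).PairwiseDisjoint id) (hk : ∀ e ∈ M, e.card = k) :
    (M.biUnion id).card = k * M.card := by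
  rw [Finset.card_biUnion (fun x hx y hy hxy => hM hx hy hxy)]
  rw [Finset.sum_congr rfl (fun x hx => show (id x).card = k from hk x hx)]
  simp [mul_comm]

lemma exists_clique_matching (k : ℕ) (hk : 1 ≤ k) (q : ℕ) : ∀ U : Finset ℕ, k * q ≤ U.card →
    ∃ M ⊆ Finset.powersetCard k U, M.card = q ∧ (M : Set (Finset ℕ)).PairwiseDisjoint id := by
  induction q with
  | zero => intro U _; exact ⟨∅, by simp, by simp, by simp⟩
  | succ q ih =>
    intro U hU
    have h1 : k ≤ U.card := by nlinarith
    obtain ⟨e, heU, hek⟩ := Finset.exists_subset_card_eq h1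
    obtain ⟨M, hM, hMq, hMd⟩ := ih (U \ e) (by
      rw [Finset.card_sdiff_of_subset heU, hek]
      have : k * (q + 1) = k * q + k := by ring
      omega)
    have hdis : Disjoint e (M.biUnion id) := by
      rw [Finset.disjoint_biUnion_right]
      intro f hf
      have := (Finset.mem_powersetCard.1 (hM hf)).1
      exact Finset.disjoint_of_subset_right this Finset.disjoint_sdiff
    have hne : e.Nonempty := by rw [← Finset.card_pos]; omega
    refine ⟨insert e M, ?_, ?_, pairwiseDisjoint_insert' hMd hdis⟩
    · intro f hf
      rw [Finset.mem_insert] at hf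
      rcases hf with rfl | hf
      · exact Finset.mem_powersetCard.2 ⟨heU, hek⟩
      · obtain ⟨h1, h2⟩ := Finset.mem_powersetCard.1 (hM hf)
        exact Finset.mem_powersetCard.2 ⟨h1.trans Finset.sdiff_subset, h2⟩
    · rw [Finset.card_insert_of_notMem (notMem_of_disjoint_biUnion hne hdis), hMq]

/-- Any matching covers at most `d` vertices outside of the clique. -/
lemma cover_outside_le {n k s d : ℕ} (hk : 1 ≤ k) {F : Finset (Finset ℕ)}
    (hF : F ⊆ Finset.powersetCard k (Finset.Icc 1 n)) (hν : matchingNumber F ≤ s)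
    {U : Finset ℕ} (hUF : Finset.powersetCard k U ⊆ F)
    (hd : U.card + d = k * s + k - 1) {M : Finset (Finset ℕ)} (hMF : M ⊆ F)
    (hM : (M : Set (Finset ℕ)).PairwiseDisjoint id) :
    (M.biUnion id \ U).card ≤ d := by
  have hcard : ∀ e ∈ M, e.card = k := fun e he => (Finset.mem_powersetCard.1 (hF (hMF he))).2
  have h1 := card_biUnion_uniform hM hcard
  set X := M.biUnion id with hX
  have h2 := Finset.card_sdiff_add_card_inter X U
  have h3 := Finset.card_sdiff_add_card_inter U X
  rw [Finset.inter_comm] at h3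
  set q := (U \ X).card / k with hq
  obtain ⟨M', hM', hM'q, hM'd⟩ := exists_clique_matching k hk q (U \ X) (Nat.mul_div_le _ _)
  have hdisj : ∀ a ∈ M, ∀ b ∈ M', Disjoint a b := by
    intro a ha b hb
    have hb' := (Finset.mem_powersetCard.1 (hM' hb)).1
    have ha' : a ⊆ X := Finset.subset_biUnion_of_mem id ha
    exact Finset.disjoint_of_subset_left ha'
      (Finset.disjoint_of_subset_right hb' Finset.disjoint_sdiff)
  have hMM' : Disjoint M M' := by
    rw [Finset.disjoint_left]
    intro a ha ha'
    have h := hdisj a ha a ha'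
    rw [disjoint_self, Finset.bot_eq_empty] at h
    have h' := hcard a ha
    rw [h, Finset.card_empty] at h'
    omega
  have hun : ((M ∪ M' : Finset (Finset ℕ)) : Set (Finset ℕ)).PairwiseDisjoint id := by
    rw [Finset.coe_union]
    refine Set.PairwiseDisjoint.union hM hM'd ?_
    intro a ha b hb _
    exact hdisj a ha b hb
  have hsub : M ∪ M' ⊆ F := by
    refine Finset.union_subset hMF (fun b hb => hUF ?_)
    exact Finset.powersetCard_mono Finset.sdiff_subset (hM' hb)
  have h4 := (card_le_matchingNumber hsub hun).trans hν
  rw [Finset.card_union_of_disjoint hMM', hM'q] at h4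
  have h5 : (U \ X).card < k * (q + 1) := by
    have := Nat.lt_mul_div_succ (U \ X).card (show 0 < k by omega)
    exact this
  have h6 : k * (M.card + q) ≤ k * s := Nat.mul_le_mul_left k h4
  have h7 : k * (M.card + q) = k * M.card + k * q := by ring
  have h8 : k * (q + 1) = k * q + k := by ring
  omega

/-- A matching all of whose edges leave `U` covers many vertices outside `U`. -/
lemma card_le_cover {M : Finset (Finset ℕ)} {U : Finset ℕ}
    (hM : (M : Set (Finset ℕ)).PairwiseDisjoint id) (hU : ∀ e ∈ M, ¬ e ⊆ U) :
    M.card ≤ (M.biUnion id \ U).card := by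
  have h : ∀ e : Finset ℕ, ∃ y, e ∈ M → y ∈ e ∧ y ∉ U := by
    intro e
    by_cases he : e ∈ M
    · obtain ⟨y, hy⟩ := Finset.not_subset.1 (hU e he)
      exact ⟨y, fun _ => hy⟩
    · exact ⟨0, fun h => absurd h he⟩
  choose f hf using h
  apply Finset.card_le_card_of_injOn f
  · intro e he
    simp only [Finset.mem_coe, Finset.mem_sdiff, Finset.mem_biUnion, id]
    exact ⟨⟨e, he, (hf e he).1⟩, (hf e he).2⟩
  · intro e he e' he' hee
    by_contra hne
    have := hM he he' hne
    exact Finset.disjoint_left.1 this (hf e he).1 (by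
      simp only [id]; rw [hee]; exact (hf e' he').1)

/-- For every outside vertex `x` there is a small set avoiding `x` that hits
all the edges which are not inside the clique. -/
lemma exists_hitting {n k s d : ℕ} (hk : 1 ≤ k) {F : Finset (Finset ℕ)}
    (hF : F ⊆ Finset.powersetCard k (Finset.Icc 1 n)) (hsat : Saturated n k s F)
    {U : Finset ℕ} (hUn : U ⊆ Finset.Icc 1 n) (hUF : Finset.powersetCard k U ⊆ F)
    (hUmax : U.card = cliqueNum n k F)
    (hd : U.card + d = k * s + k - 1) {x : ℕ} (hx : x ∈ Finset.Icc 1 n) (hxU : x ∉ U) :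
    ∃ V : Finset ℕ, x ∉ V ∧ V.card ≤ k * d ∧ ∀ e ∈ F, ¬ e ⊆ U → ¬ Disjoint e V := by
  have hν := hsat.1
  -- a non-edge through `x`
  have hG : ∃ G ∈ Finset.powersetCard k (insert x U), G ∉ F := by
    by_contra! hcon
    have := card_le_cliqueNum (n := n) (k := k) (F := F) (U := insert x U)
      (Finset.insert_subset hx hUn) hcon
    rw [Finset.card_insert_of_notMem hxU] at this
    omega
  obtain ⟨G, hG, hGF⟩ := hG
  obtain ⟨hGU, hGk⟩ := Finset.mem_powersetCard.1 hG
  have hxG : x ∈ G := by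
    by_contra hxG
    apply hGF
    apply hUF
    refine Finset.mem_powersetCard.2 ⟨fun y hy => ?_, hGk⟩
    rcases Finset.mem_insert.1 (hGU hy) with rfl | h
    · exact absurd hy hxG
    · exact h
  have hGn : G ∈ Finset.powersetCard k (Finset.Icc 1 n) :=
    Finset.mem_powersetCard.2 ⟨hGU.trans (Finset.insert_subset hx hUn), hGk⟩
  obtain ⟨M', hM'F, hM'c, hM'd⟩ := exists_matchingNumber (insert G F)
  rw [hsat.2 G hGn hGF] at hM'c
  have hGM' : G ∈ M' := by
    by_contra hcon
    have : M' ⊆ F := by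
      intro a ha
      rcases Finset.mem_insert.1 (hM'F ha) with rfl | h
      · exact absurd ha hcon
      · exact h
    have := (card_le_matchingNumber this hM'd).trans hν
    omega
  set M := M'.erase G with hM
  have hMF : M ⊆ F := by
    intro a ha
    rw [hM, Finset.mem_erase] at ha
    rcases Finset.mem_insert.1 (hM'F ha.2) with h | h
    · exact absurd h ha.1
    · exact h
  have hMM' : M ⊆ M' := Finset.erase_subset _ _
  have hMd : (M : Set (Finset ℕ)).PairwiseDisjoint id := hM'd.subset (by exact_mod_cast hMM')
  have hMc : M.card = s := by rw [hM, Finset.card_erase_of_mem hGM', hM'c]; simp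
  have hcard : ∀ e ∈ F, e.card = k := fun e he => (Finset.mem_powersetCard.1 (hF he)).2
  have hGdis : Disjoint G (M.biUnion id) := by
    rw [Finset.disjoint_biUnion_right]
    intro a ha
    rw [hM, Finset.mem_erase] at ha
    exact hM'd hGM' ha.2 (Ne.symm ha.1)
  -- `M` covers at least `d` vertices outside
  have hcov : d ≤ (M.biUnion id \ U).card := by
    have h1 := card_biUnion_uniform hMd (fun e he => hcard e (hMF he))
    have h2 := Finset.card_sdiff_add_card_inter (M.biUnion id) U
    have h3 : (M.biUnion id ∩ U).card + (G.erase x).card ≤ U.card := by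
      rw [← Finset.card_union_of_disjoint]
      · apply Finset.card_le_card
        refine Finset.union_subset Finset.inter_subset_right ?_
        intro y hy
        rw [Finset.mem_erase] at hy
        rcases Finset.mem_insert.1 (hGU hy.2) with h | h
        · exact absurd h hy.1
        · exact h
      · exact Finset.disjoint_of_subset_left Finset.inter_subset_left
          (Finset.disjoint_of_subset_right (Finset.erase_subset _ _) hGdis.symm)
    rw [Finset.card_erase_of_mem hxG, hGk] at h3
    rw [hMc] at h1
    omega
  -- the part of `M` going outside
  classical
  set N := M.filter (fun e => ¬ e ⊆ U) with hN
  have hNM : N ⊆ M := Finset.filter_subset _ _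
  have hNd : (N : Set (Finset ℕ)).PairwiseDisjoint id := hMd.subset (by exact_mod_cast hNM)
  have hNcov : M.biUnion id \ U ⊆ N.biUnion id \ U := by
    intro y hy
    simp only [Finset.mem_sdiff, Finset.mem_biUnion, id] at hy ⊢
    obtain ⟨⟨a, ha, hya⟩, hyU⟩ := hy
    refine ⟨⟨a, ?_, hya⟩, hyU⟩
    rw [hN, Finset.mem_filter]
    exact ⟨ha, fun h => hyU (h hya)⟩
  have hNcov' : d ≤ (N.biUnion id \ U).card := hcov.trans (Finset.card_le_card hNcov)
  have hNF : N ⊆ F := hNM.trans hMF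
  refine ⟨N.biUnion id, ?_, ?_, ?_⟩
  · intro hxN
    have : x ∈ M.biUnion id := Finset.biUnion_subset_biUnion_of_subset_left id hNM hxN
    exact Finset.disjoint_left.1 hGdis hxG this
  · rw [card_biUnion_uniform hNd (fun e he => hcard e (hNF he))]
    apply Nat.mul_le_mul_left
    refine le_trans ?_ (cover_outside_le hk hF hν hUF hd hNF hNd)
    exact card_le_cover hNd (fun e he => (Finset.mem_filter.1 he).2)
  · intro e he heU hdis
    have h1 := cover_outside_le hk hF hν hUF hd (M := insert e N)
      (Finset.insert_subset he hNF) (pairwiseDisjoint_insert' hNd hdis)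
    obtain ⟨y, hye, hyU⟩ := Finset.not_subset.1 heU
    have h2 : insert y (N.biUnion id \ U) ⊆ (insert e N).biUnion id \ U := by
      intro z hz
      rw [Finset.biUnion_insert]
      simp only [Finset.mem_insert, Finset.mem_sdiff, Finset.mem_union, id] at hz ⊢
      rcases hz with rfl | hz
      · exact ⟨Or.inl hye, hyU⟩
      · exact ⟨Or.inr hz.1, hz.2⟩
    have h3 := Finset.card_le_card h2
    rw [Finset.card_insert_of_notMem] at h3
    · omega
    · intro hy
      exact Finset.disjoint_left.1 hdis hye (Finset.mem_sdiff.1 hy).1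

/-- Number of edges through `v` that hit `S`. -/
lemma card_edges_hit {n k : ℕ} (hk : 2 ≤ k) {F : Finset (Finset ℕ)}
    (hF : F ⊆ Finset.powersetCard k (Finset.Icc 1 n)) (v : ℕ) (S : Finset ℕ) (hv : v ∉ S) :
    (F.filter (fun e => v ∈ e ∧ ¬ Disjoint e S)).card ≤ S.card * Nat.choose (n - 1) (k - 2) := by
  classical
  by_cases hvn : v ∈ Finset.Icc 1 n
  swap
  · rw [Finset.filter_eq_empty_iff.2]
    · simp
    · intro e he h
      exact hvn ((Finset.mem_powersetCard.1 (hF he)).1 h.1)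
  have h1 : F.filter (fun e => v ∈ e ∧ ¬ Disjoint e S) ⊆
      S.biUnion (fun z => (F.filter (fun e => v ∈ e ∧ z ∈ e))) := by
    intro e he
    rw [Finset.mem_filter] at he
    obtain ⟨he, hve, hS⟩ := he
    rw [Finset.not_disjoint_iff] at hS
    obtain ⟨z, hze, hzS⟩ := hS
    rw [Finset.mem_biUnion]
    exact ⟨z, hzS, Finset.mem_filter.2 ⟨he, hve, hze⟩⟩
  refine (Finset.card_le_card h1).trans ?_
  refine Finset.card_biUnion_le_card_mul _ _ _ ?_
  intro z hz
  have hzv : z ≠ v := fun h => hv (h ▸ hz)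
  have h2 : ((Finset.Icc 1 n).erase v).card = n - 1 := by
    rw [Finset.card_erase_of_mem hvn]; simp
  rw [← h2, ← Finset.card_powersetCard]
  apply Finset.card_le_card_of_injOn (fun e => (e.erase v).erase z)
  · intro e he
    have he := (Finset.mem_filter.1 he)
    obtain ⟨he, hve, hze⟩ := he
    obtain ⟨he1, he2⟩ := Finset.mem_powersetCard.1 (hF he)
    rw [Finset.mem_coe, Finset.mem_powersetCard]
    refine ⟨(Finset.erase_subset _ _).trans (Finset.erase_subset_erase _ he1), ?_⟩
    rw [Finset.card_erase_of_mem (Finset.mem_erase.2 ⟨hzv, hze⟩), Finset.card_erase_of_mem hve, he2]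
    omega
  · intro e he f hf hef
    have he := (Finset.mem_filter.1 he)
    have hf := (Finset.mem_filter.1 hf)
    obtain ⟨he, hve, hze⟩ := he
    obtain ⟨hf, hvf, hzf⟩ := hf
    simp only at hef
    rw [← Finset.insert_erase hve, ← Finset.insert_erase hvf,
      ← Finset.insert_erase (Finset.mem_erase.2 ⟨hzv, hze⟩),
      ← Finset.insert_erase (Finset.mem_erase.2 ⟨hzv, hzf⟩), hef]

/-- Number of edges through `v` not inside of `U`, for `v` in `U`. -/
lemma card_edges_out {n k : ℕ} {F : Finset (Finset ℕ)}
    (hF : F ⊆ Finset.powersetCard k (Finset.Icc 1 n)) {U : Finset ℕ}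
    (hUn : U ⊆ Finset.Icc 1 n) (v : ℕ) (hv : v ∈ U) :
    (F.filter (fun e => v ∈ e ∧ ¬ e ⊆ U)).card + Nat.choose U.card (k - 1)
      ≤ Nat.choose n (k - 1) := by
  classical
  have h2 : (Finset.Icc 1 n).card = n := by simp
  have hsub : Finset.powersetCard (k - 1) U ⊆ Finset.powersetCard (k - 1) (Finset.Icc 1 n) :=
    Finset.powersetCard_mono hUn
  have h3 := Finset.card_sdiff_add_card_eq_card hsub
  rw [Finset.card_powersetCard, Finset.card_powersetCard, h2] at h3
  rw [← h3]
  apply Nat.add_le_add_right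
  apply Finset.card_le_card_of_injOn (fun e => e.erase v)
  · intro e he
    have he := (Finset.mem_filter.1 he)
    obtain ⟨he, hve, hU⟩ := he
    obtain ⟨he1, he2⟩ := Finset.mem_powersetCard.1 (hF he)
    rw [Finset.mem_coe, Finset.mem_sdiff, Finset.mem_powersetCard, Finset.mem_powersetCard]
    refine ⟨⟨(Finset.erase_subset _ _).trans he1, ?_⟩, ?_⟩
    · rw [Finset.card_erase_of_mem hve, he2]
    · rintro ⟨h, -⟩
      apply hU
      rw [← Finset.insert_erase hve]
      exact Finset.insert_subset hv h
  · intro e he f hf hef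
    have he := (Finset.mem_filter.1 he)
    have hf := (Finset.mem_filter.1 hf)
    simp only at hef
    rw [← Finset.insert_erase he.2.1, ← Finset.insert_erase hf.2.1, hef]

/-- There are at most `d` vertices through which there are many edges leaving `U`. -/
lemma card_big_le {n k s d : ℕ} (hk : 2 ≤ k) {F : Finset (Finset ℕ)}
    (hF : F ⊆ Finset.powersetCard k (Finset.Icc 1 n)) (hν : matchingNumber F ≤ s)
    {U : Finset ℕ} (hUF : Finset.powersetCard k U ⊆ F)
    (hd : U.card + d = k * s + k - 1) (B : Finset ℕ)
    (hB : ∀ v ∈ B, (k * d + d) * Nat.choose (n - 1) (k - 2)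
      < (F.filter (fun e => v ∈ e ∧ ¬ e ⊆ U)).card) :
    B.card ≤ d := by
  classical
  by_contra! hcon
  obtain ⟨C, hCB, hC⟩ := Finset.exists_subset_card_eq (show d + 1 ≤ B.card by omega)
  have hcard : ∀ e ∈ F, e.card = k := fun e he => (Finset.mem_powersetCard.1 (hF he)).2
  have key : ∀ D ⊆ C, ∃ M ⊆ F, (M : Set (Finset ℕ)).PairwiseDisjoint id ∧ M.card = D.card ∧
      (∀ e ∈ M, ¬ e ⊆ U) ∧ Disjoint (M.biUnion id) (C \ D) := by
    intro D
    induction D using Finset.induction_on with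
    | empty => intro _; exact ⟨∅, by simp, by simp, by simp, by simp, by simp⟩
    | insert y D hyD ih =>
      intro hDC
      have hyC : y ∈ C := hDC (Finset.mem_insert_self _ _)
      obtain ⟨M, hMF, hMd, hMc, hMU, hMC⟩ := ih ((Finset.subset_insert _ _).trans hDC)
      have hyM : y ∉ M.biUnion id := fun h =>
        Finset.disjoint_left.1 hMC h (Finset.mem_sdiff.2 ⟨hyC, hyD⟩)
      set S := M.biUnion id ∪ C.erase y with hS
      have hyS : y ∉ S := by
        rw [hS, Finset.mem_union]
        rintro (h | h)
        · exact hyM h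
        · exact (Finset.mem_erase.1 h).1 rfl
      have hDd : D.card ≤ d := by
        have := Finset.card_le_card hDC
        rw [Finset.card_insert_of_notMem hyD] at this
        omega
      have hSc : S.card ≤ k * d + d := by
        refine (Finset.card_union_le _ _).trans ?_
        rw [card_biUnion_uniform hMd (fun e he => hcard e (hMF he)),
          Finset.card_erase_of_mem hyC, hC, hMc]
        have := Nat.mul_le_mul_left k hDd
        omega
      have h1 := card_edges_hit hk hF y S hyS
      have h2 := hB y (hCB hyC)
      have h3 : ∃ e ∈ F.filter (fun e => y ∈ e ∧ ¬ e ⊆ U),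
          e ∉ F.filter (fun e => y ∈ e ∧ ¬ Disjoint e S) := by
        by_contra! hcon
        have := Finset.card_le_card hcon
        have := Nat.mul_le_mul_right (Nat.choose (n - 1) (k - 2)) hSc
        omega
      obtain ⟨e, he, he'⟩ := h3
      rw [Finset.mem_filter] at he
      obtain ⟨heF, hye, heU⟩ := he
      have heS : Disjoint e S := by
        by_contra h
        exact he' (Finset.mem_filter.2 ⟨heF, hye, h⟩)
      rw [hS, Finset.disjoint_union_right] at heS
      refine ⟨insert e M, Finset.insert_subset heF hMF,
        pairwiseDisjoint_insert' hMd heS.1, ?_, ?_, ?_⟩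
      · rw [Finset.card_insert_of_notMem (notMem_of_disjoint_biUnion ⟨y, hye⟩ heS.1),
          Finset.card_insert_of_notMem hyD, hMc]
      · intro f hf
        rcases Finset.mem_insert.1 hf with rfl | hf
        · exact heU
        · exact hMU f hf
      · rw [Finset.biUnion_insert, Finset.disjoint_union_left]
        constructor
        · refine Finset.disjoint_of_subset_right ?_ heS.2
          intro z hz
          rw [Finset.mem_sdiff, Finset.mem_insert] at hz
          exact Finset.mem_erase.2 ⟨fun h => hz.2 (Or.inl h), hz.1⟩
        · refine Finset.disjoint_of_subset_right ?_ hMC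
          exact Finset.sdiff_subset_sdiff le_rfl (Finset.subset_insert _ _)
  obtain ⟨M, hMF, hMd, hMc, hMU, -⟩ := key C le_rfl
  have h1 := cover_outside_le (by omega) hF hν hUF hd hMF hMd
  have h2 := card_le_cover hMd hMU
  omega

lemma choose_add_ge (u k d : ℕ) (hk : 1 ≤ k) :
    Nat.choose u k + d * Nat.choose u (k - 1) ≤ Nat.choose (u + d) k := by
  induction d with
  | zero => simp
  | succ d ih =>
    obtain ⟨j, rfl⟩ : ∃ j, k = j + 1 := ⟨k - 1, by omega⟩
    rw [← add_assoc, Nat.choose_succ_succ']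
    have := Nat.choose_le_choose j (show u ≤ u + d by omega)
    simp only [Nat.add_sub_cancel] at *
    rw [add_mul, one_mul]
    omega

/-- The main combinatorial estimate. -/
lemma main_count {n k s d : ℕ} (hk : 2 ≤ k) {F : Finset (Finset ℕ)}
    (hF : F ⊆ Finset.powersetCard k (Finset.Icc 1 n)) (hsat : Saturated n k s F)
    {U : Finset ℕ} (hUn : U ⊆ Finset.Icc 1 n) (hUF : Finset.powersetCard k U ⊆ F)
    (hUmax : U.card = cliqueNum n k F)
    (hd : U.card + d = k * s + k - 1) (hd1 : 1 ≤ d) (hn : k * s + k - 1 ≤ n) :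
    F.card ≤ Nat.choose U.card k + d * (Nat.choose n (k - 1) - Nat.choose U.card (k - 1))
      + (k * d) * ((k * d + d) * Nat.choose (n - 1) (k - 2)) := by
  classical
  have hex : ∃ x ∈ Finset.Icc 1 n, x ∉ U := by
    by_contra! hcon
    have := Finset.card_le_card (show Finset.Icc 1 n ⊆ U from hcon)
    simp at this
    omega
  obtain ⟨x, hx, hxU⟩ := hex
  obtain ⟨V, -, hVc, hV⟩ := exists_hitting (by omega) hF hsat hUn hUF hUmax hd hx hxU
  set Q := Nat.choose (n - 1) (k - 2) with hQ
  set E : ℕ → Finset (Finset ℕ) := fun v => F.filter (fun e => v ∈ e ∧ ¬ e ⊆ U) with hE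
  set B := V.filter (fun v => (k * d + d) * Q < (E v).card) with hB
  have hBd : B.card ≤ d := by
    apply card_big_le hk hF hsat.1 hUF hd B
    intro v hv
    exact (Finset.mem_filter.1 hv).2
  have hBU : B ⊆ U := by
    intro v hv
    by_contra hvU
    have hv' := (Finset.mem_filter.1 hv).2
    have hvn : v ∈ Finset.Icc 1 n := by
      by_contra hvn
      have : E v = ∅ := by
        rw [hE]
        apply Finset.filter_eq_empty_iff.2
        intro e he h
        exact hvn ((Finset.mem_powersetCard.1 (hF he)).1 h.1)
      rw [this] at hv'
      simp at hv'
    obtain ⟨V', hvV', hVc', hV'⟩ := exists_hitting (by omega) hF hsat hUn hUF hUmax hd hvn hvU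
    have h1 := card_edges_hit hk hF v V' hvV'
    have h2 : E v ⊆ F.filter (fun e => v ∈ e ∧ ¬ Disjoint e V') := by
      intro e he
      obtain ⟨he, hve, heU⟩ := Finset.mem_filter.1 he
      exact Finset.mem_filter.2 ⟨he, hve, hV' e he heU⟩
    have h3 := Finset.card_le_card h2
    rw [← hQ] at h1
    have h4 := Nat.mul_le_mul_right Q (show V'.card ≤ k * d + d by omega)
    omega
  have hcovF : F ⊆ (Finset.powersetCard k U ∪ B.biUnion E) ∪ (V \ B).biUnion E := by
    intro e he
    by_cases heU : e ⊆ U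
    · apply Finset.mem_union_left
      apply Finset.mem_union_left
      exact Finset.mem_powersetCard.2 ⟨heU, (Finset.mem_powersetCard.1 (hF he)).2⟩
    · obtain ⟨v, hve, hvV⟩ := Finset.not_disjoint_iff.1 (hV e he heU)
      have hev : e ∈ E v := Finset.mem_filter.2 ⟨he, hve, heU⟩
      by_cases hvB : v ∈ B
      · apply Finset.mem_union_left
        apply Finset.mem_union_right
        exact Finset.mem_biUnion.2 ⟨v, hvB, hev⟩
      · apply Finset.mem_union_right
        exact Finset.mem_biUnion.2 ⟨v, Finset.mem_sdiff.2 ⟨hvV, hvB⟩, hev⟩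
  refine (Finset.card_le_card hcovF).trans ((Finset.card_union_le _ _).trans ?_)
  refine Nat.add_le_add ((Finset.card_union_le _ _).trans ?_) ?_
  · rw [Finset.card_powersetCard]
    apply Nat.add_le_add_left
    refine (Finset.card_biUnion_le_card_mul _ _
      (Nat.choose n (k - 1) - Nat.choose U.card (k - 1)) ?_).trans (Nat.mul_le_mul_right _ hBd)
    intro v hv
    have := card_edges_out hF hUn v (hBU hv)
    exact Nat.le_sub_of_add_le this
  · refine (Finset.card_biUnion_le_card_mul _ _ ((k * d + d) * Q) ?_).trans
      (Nat.mul_le_mul_right _ ((Finset.card_le_card Finset.sdiff_subset).trans hVc))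
    intro v hv
    rw [Finset.mem_sdiff] at hv
    by_contra! h
    exact hv.2 (Finset.mem_filter.2 ⟨hv.1, h⟩)

lemma choose_sub_le (j w u : ℕ) (hj : 1 ≤ j) (hu : 1 ≤ u + w) :
    Nat.choose (u + w) j ≤ Nat.choose u j + w * Nat.choose (u + w - 1) (j - 1) := by
  obtain ⟨i, rfl⟩ : ∃ i, j = i + 1 := ⟨j - 1, by omega⟩
  simp only [Nat.add_sub_cancel]
  clear hj hu
  induction w with
  | zero => simp
  | succ w ih =>
    rw [← add_assoc, Nat.choose_succ_succ', Nat.add_sub_cancel, add_mul, one_mul]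
    have := Nat.mul_le_mul_left w (Nat.choose_le_choose i (show u + w - 1 ≤ u + w by omega))
    omega

/-- The final numeric inequality. -/
lemma final_numeric (k n s u d Q N Cu ε : ℝ) (hk : 3 ≤ k) (hε : ε = 1 / (8 * k ^ 4))
    (hn : 100 * k ^ 6 ≤ n) (hs : n * (1 / k - 1 / (2 * k ^ 2)) - 1 < s) (hs0 : 0 ≤ s)
    (hsn : k * s + k - 1 ≤ n)
    (hu : (1 - ε) * (k * s) ≤ u) (hd : u + d = k * s + k - 1) (hd2 : 2 ≤ d)
    (hQ : 0 ≤ Q) (hN : (k - 1) * N = n * Q) (hCu : N ≤ Cu + (n - u) * Q) :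
    (k * d) * ((k * d + d) * Q) ≤ (d - 2) * (2 * Cu - N) + 8 * ε * k ^ 4 * N := by
  have hk0 : 0 < k := by linarith
  have h8 : 8 * ε * k ^ 4 = 1 := by rw [hε]; field_simp
  have hks : n - n / (2 * k) - k ≤ k * s := by
    have h1 : (n * (1 / k - 1 / (2 * k ^ 2)) - 1) * k ≤ s * k :=
      mul_le_mul_of_nonneg_right hs.le hk0.le
    have h2 : (n * (1 / k - 1 / (2 * k ^ 2)) - 1) * k = n - n / (2 * k) - k := by
      field_simp
    linarith
  have hn0 : 0 < n := lt_of_lt_of_le (by positivity) hn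
  have hεn : ε * n = n / (8 * k ^ 4) := by rw [hε]; ring
  have hε0 : 0 < ε := by rw [hε]; positivity
  have hksn : k * s ≤ n := by linarith
  have hεks : ε * (k * s) ≤ ε * n := mul_le_mul_of_nonneg_left hksn hε0.le
  -- the estimates on `n / k ^ i`
  obtain ⟨t, ht⟩ : ∃ t, t = n / (8 * k ^ 4) := ⟨_, rfl⟩
  have hnt : n = t * (8 * k ^ 4) := by rw [ht]; field_simp
  have ht0 : 0 ≤ t := by rw [ht]; positivity
  have htk : 12 * k ^ 2 ≤ t := by
    rw [ht, le_div_iff₀ (by positivity)]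
    nlinarith [pow_pos hk0 6]
  have e1 : n / (2 * k) = t * (4 * k ^ 3) := by rw [hnt]; field_simp; ring
  rw [e1] at hks
  rw [hεn, ← ht] at hεks
  have hun : n - u ≤ t * (4 * k ^ 3) + k + t := by nlinarith
  have hda : d ≤ t + k := by nlinarith
  have hN1 : t * (8 * k ^ 3 + 8 * k ^ 2) * Q ≤ N := by
    have h1 : (k - 1) * (t * (8 * k ^ 3 + 8 * k ^ 2) * Q) ≤ (k - 1) * N := by
      rw [hN, hnt]
      have : (k - 1) * (t * (8 * k ^ 3 + 8 * k ^ 2) * Q)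
        = t * (8 * k ^ 4) * Q - 8 * k ^ 2 * (t * Q) := by ring
      rw [this]
      have : 0 ≤ 8 * k ^ 2 * (t * Q) := by positivity
      linarith
    exact le_of_mul_le_mul_left h1 (by linarith)
  have hgap : t * (4 * k ^ 2) * Q ≤ 2 * Cu - N := by
    have h1 : (n - u) * Q ≤ (t * (4 * k ^ 3) + k + t) * Q := mul_le_mul_of_nonneg_right hun hQ
    have h2 : 0 ≤ (t * (4 * k ^ 2) - 2 * k - 2 * t) * Q := by
      apply mul_nonneg _ hQ
      have h9 : 9 ≤ k ^ 2 := by nlinarith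
      have h10 : t * 9 ≤ t * k ^ 2 := mul_le_mul_of_nonneg_left h9 ht0
      have h11 : k ≤ t := by nlinarith
      linarith
    linarith
  rw [h8, one_mul]
  have hg2 : (d - 2) * (t * (4 * k ^ 2) * Q) ≤ (d - 2) * (2 * Cu - N) :=
    mul_le_mul_of_nonneg_left hgap (by linarith)
  have hmain : (k * d) * (k * d + d) ≤ (d - 2) * (t * (4 * k ^ 2)) + t * (8 * k ^ 3 + 8 * k ^ 2) := by
    have h1 : (k * d) * (k * d + d) ≤ (2 * k ^ 2) * d ^ 2 := by
      have : (k * d) * (k * d + d) = (k ^ 2 + k) * d ^ 2 := by ring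
      rw [this]
      apply mul_le_mul_of_nonneg_right _ (by positivity)
      nlinarith
    have h2 : d ^ 2 ≤ (d - 2) * (2 * t) + 4 * t := by
      have : d ^ 2 ≤ d * (t + k) := by rw [sq]; exact mul_le_mul_of_nonneg_left hda (by linarith)
      have : d * (t + k) ≤ d * (2 * t) := mul_le_mul_of_nonneg_left (by nlinarith) (by linarith)
      linarith
    have h3 : (2 * k ^ 2) * d ^ 2 ≤ (2 * k ^ 2) * ((d - 2) * (2 * t) + 4 * t) :=
      mul_le_mul_of_nonneg_left h2 (by positivity)
    have h4 : 0 ≤ t * (8 * k ^ 3) := by positivity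
    linarith
  have hmQ := mul_le_mul_of_nonneg_right hmain hQ
  linarith

/-- Guo–Lu–Peng bound for saturated families with a large (but not too large) clique. -/
theorem stmt19 (k : ℕ) (hk : 3 ≤ k) :
    ∃ (ε : ℝ) (n₀ : ℕ), 0 < ε ∧ 0 < n₀ ∧
      ∀ (n s : ℕ), n₀ < n →
        (n : ℝ) * (1 / k - 1 / (2 * k ^ 2)) - 1 < s → (s : ℝ) ≤ ((n : ℝ) - k + 1) / k →
        ∀ F ⊆ Finset.powersetCard k (Finset.Icc 1 n),
          Saturated n k s F → matchingNumber F ≤ s →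
          (1 - ε) * (k * s) ≤ (cliqueNum n k F : ℝ) →
          cliqueNum n k F ≤ k * s + k - 3 →
          (F.card : ℝ) ≤ Nat.choose (k * s + k - 1) k
            - 3.98 * Nat.choose ⌈((1 - ε) * (k * s) : ℝ)⌉₊ (k - 1)
            + (2 + 8 * ε * k ^ 4) * Nat.choose n (k - 1) := by
  have hkR : (3 : ℝ) ≤ k := by exact_mod_cast hk
  have hk0 : (0 : ℝ) < k := by linarith
  refine ⟨1 / (8 * (k : ℝ) ^ 4), 100 * k ^ 6, by positivity, by positivity, ?_⟩
  intro n s hn hs1 hs2 F hF hsat hν hω1 hω2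
  set ε : ℝ := 1 / (8 * (k : ℝ) ^ 4) with hε
  obtain ⟨U, hUn, hUc, hUF⟩ := exists_cliqueNum n k F (by omega)
  rw [← hUc] at hω1 hω2
  obtain ⟨d, hd⟩ : ∃ d, U.card + d = k * s + k - 1 := ⟨k * s + k - 1 - U.card, by omega⟩
  have hd2 : 2 ≤ d := by omega
  have hsnR : (k : ℝ) * s + k - 1 ≤ n := by
    rw [le_div_iff₀ hk0] at hs2
    linarith
  have hsn : k * s + k - 1 ≤ n := by
    have : k * s + k ≤ n + 1 := by
      have : ((k * s + k : ℕ) : ℝ) ≤ ((n + 1 : ℕ) : ℝ) := by push_cast; linarith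
      exact_mod_cast this
    omega
  have hcount := main_count (by omega) hF hsat hUn hUF hUc hd (by omega) hsn
  have hUle : U.card ≤ n := by omega
  have hchU : Nat.choose U.card (k - 1) ≤ Nat.choose n (k - 1) := Nat.choose_le_choose _ hUle
  have hadd := choose_add_ge U.card k d (by omega)
  rw [hd] at hadd
  have hsub := choose_sub_le (k - 1) (n - U.card) U.card (by omega) (by omega)
  rw [Nat.add_sub_cancel' hUle, show k - 1 - 1 = k - 2 by omega] at hsub
  have hNQ : (k - 1) * Nat.choose n (k - 1) = n * Nat.choose (n - 1) (k - 2) := by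
    have := Nat.add_one_mul_choose_eq (n - 1) (k - 2)
    rw [show n - 1 + 1 = n by omega, show k - 2 + 1 = k - 1 by omega] at this
    rw [this, mul_comm]
  have hr : Nat.choose ⌈((1 - ε) * (k * s) : ℝ)⌉₊ (k - 1) ≤ Nat.choose U.card (k - 1) :=
    Nat.choose_le_choose _ (Nat.ceil_le.2 hω1)
  generalize Nat.choose ⌈((1 - ε) * (k * s) : ℝ)⌉₊ (k - 1) = R at hr ⊢
  have hnum := final_numeric k n s U.card d (Nat.choose (n - 1) (k - 2)) (Nat.choose n (k - 1))
    (Nat.choose U.card (k - 1)) ε hkR hε (by exact_mod_cast hn.le) hs1 (Nat.cast_nonneg _) hsnR hω1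
    (by
      have : U.card + d + 1 = k * s + k := by omega
      have : ((U.card + d + 1 : ℕ) : ℝ) = ((k * s + k : ℕ) : ℝ) := by rw [this]
      push_cast at this
      linarith)
    (by exact_mod_cast hd2) (Nat.cast_nonneg _)
    (by
      have : (((k - 1) * Nat.choose n (k - 1) : ℕ) : ℝ)
        = ((n * Nat.choose (n - 1) (k - 2) : ℕ) : ℝ) := by rw [hNQ]
      rw [Nat.cast_mul, Nat.cast_mul, Nat.cast_sub (by omega), Nat.cast_one] at this
      exact this)
    (by
      have := (Nat.cast_le (α := ℝ)).2 hsub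
      rw [Nat.cast_add, Nat.cast_mul, Nat.cast_sub hUle] at this
      exact this)
  have hcountR := (Nat.cast_le (α := ℝ)).2 hcount
  have haddR := (Nat.cast_le (α := ℝ)).2 hadd
  have hrR := (Nat.cast_le (α := ℝ)).2 hr
  rw [Nat.cast_add, Nat.cast_add, Nat.cast_mul d, Nat.cast_sub hchU] at hcountR
  push_cast at hcountR haddR
  have hU0 : (0 : ℝ) ≤ Nat.choose U.card (k - 1) := Nat.cast_nonneg _
  linarith
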